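/- For every n ≥ 3 and all i₁,…,i_n ∈ ℤ, define the q-n-bracket of the operators L recursively by ⟦L_i,L_j⟧ = q^{i−j}·L_i∘L_j − q^{j−i}·L_j∘L_i and, for 3 ≤ m ≤ n, ⟦L_{i₁},…,L_{i_m}⟧ = Σ_{s=1}^{m}(−1)^{s+1}·q^{x_m·i_s + y_m·(Σ_{t≠s} i_t)}·L_{i_s}∘⟦L_{i₁},…,L̂_{i_s},…,L_{i_m}⟧ (hat = omission), where (x₃,y₃) = (2,−1), (x_m,y_m) = (m,0) for even m ≥ 4, and (x_m,y_m) = (m−1,−2) for odd m ≥ 5. Then ⟦L_{i₁},…,L_{i_n}⟧ = f_n(i₁,…,i_n)·L_{i₁+⋯+i_n} as ℂ-linear operators on V. -/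

import Mathlib

/-- The q-number `[x] = (q^x - q^{-x})/(q - q⁻¹)`. -/
noncomputable def qnum (q : ℂ) (x : ℤ) : ℂ := (q ^ x - q ^ (-x)) / (q - q⁻¹)

/-- The operator `L_m = -q^N (a†)^{m+1} a` on `V = ℤ →₀ ℂ`,
determined by `L_m e_k = -[k] q^{k+m} e_{k+m}`. -/
noncomputable def Lop (q : ℂ) (m : ℤ) : Module.End ℂ (ℤ →₀ ℂ) :=
  Finsupp.lsum ℂ fun k : ℤ => (-(qnum q k) * q ^ (k + m)) • Finsupp.lsingle (k + m)

/-- The exponent `x_m` in the star product: `x₃ = 2`, `x_m = m` for even `m ≥ 4`,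
`x_m = m - 1` for odd `m ≥ 5`. -/
def qxm (m : ℕ) : ℤ := if m = 3 then 2 else if m % 2 = 0 then (m : ℤ) else (m : ℤ) - 1

/-- The exponent `y_m` in the star product: `y₃ = -1`, `y_m = 0` for even `m ≥ 4`,
`y_m = -2` for odd `m ≥ 5`. -/
def qym (m : ℕ) : ℤ := if m = 3 then -1 else if m % 2 = 0 then 0 else -2

/-- The recursively defined q-n-bracket of the operators `L` (with fuel parameter):
`⟦L_i,L_j⟧ = q^{i-j} L_i∘L_j - q^{j-i} L_j∘L_i` and, for `m ≥ 3`,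
`⟦L_{i₁},…,L_{i_m}⟧ = Σ_s (-1)^{s+1} q^{x_m i_s + y_m (Σ_{t≠s} i_t)} L_{i_s} ∘ ⟦…omit s…⟧`. -/
noncomputable def qnbrAux (q : ℂ) : ℕ → List ℤ → Module.End ℂ (ℤ →₀ ℂ)
  | 0, _ => 0
  | _ + 1, [] => 0
  | _ + 1, [i] => Lop q i
  | _ + 1, [i, j] => q ^ (i - j) • (Lop q i * Lop q j) - q ^ (j - i) • (Lop q j * Lop q i)
  | fuel + 1, l => ∑ s ∈ Finset.range l.length,
      ((-1 : ℂ) ^ s *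
        q ^ (qxm l.length * l.getD s 0 + qym l.length * (l.sum - l.getD s 0))) •
        (Lop q (l.getD s 0) * qnbrAux q fuel (l.eraseIdx s))

/-- The q-n-bracket `⟦L_{i₁},…,L_{i_n}⟧`. -/
noncomputable def qnbr (q : ℂ) (l : List ℤ) : Module.End ℂ (ℤ →₀ ℂ) := qnbrAux q l.length l

/-- The structure constants `f_n(i₁,…,i_n) = s(n)·(q-q⁻¹)^{-(n-1)}·det M`,
`M_{r,j} = q^{2(r - ⌊(n-1)/2⌋) i_j}`. -/
noncomputable def fVW (q : ℂ) (n : ℕ) (i : Fin n → ℤ) : ℂ :=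
  (if n % 4 = 0 ∨ n % 4 = 1 then (1 : ℂ) else -1) * (q - q⁻¹) ^ (1 - (n : ℤ)) *
    Matrix.det (Matrix.of fun r j : Fin n =>
      q ^ (2 * ((r : ℤ) - (((n - 1) / 2 : ℕ) : ℤ)) * i j))

/-!
The operator `K = q^{2N}` turns the product rule into
`L_i L_j = (q - q⁻¹)⁻¹ (L_{i+j} - q^{2j} L_{i+j} K)`. Inserting the closed form of the shorter
brackets into the recursion therefore writes the `n`-bracket as a combination of `L_S` and `L_S K`,
where `S = i₁ + ⋯ + i_n`. Both coefficients are Laplace expansions along an added row of powers of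
the `q^{2 i_j}`: for `L_S` this row extends the matrix of exponents by one step and gives the next
determinant, while for `L_S K` the factor `q^{2j}`, here `q^{2(S - i_s)}`, lowers the exponent of
the added row by one, so that it repeats a row already present and the sum vanishes. The choice of
`x_n` and `y_n` produces exactly the added row and recentres the exponents from `⌊(n-2)/2⌋` to
`⌊(n-1)/2⌋`.
-/

theorem zpow_sum₀ {ι G : Type*} [CommGroupWithZero G] {a : G} (ha : a ≠ 0) (s : Finset ι)
    (f : ι → ℤ) : a ^ (∑ j ∈ s, f j) = ∏ j ∈ s, a ^ f j := by
  induction s using Finset.cons_induction with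
  | empty => simp
  | cons j s hj ih => rw [Finset.sum_cons, Finset.prod_cons, zpow_add₀ ha, ih]

theorem sub_inv_ne_zero_of_sq_ne_one {K : Type*} [DivisionRing K] {q : K} (hq : q ≠ 0)
    (hq2 : q ^ 2 ≠ 1) : q - q⁻¹ ≠ 0 := by
  contrapose! hq2
  rw [pow_two, ← mul_inv_cancel₀ hq, ← sub_eq_zero.mp hq2]

theorem neg_one_pow_choose_two {R : Type*} [Monoid R] [HasDistribNeg R] (n : ℕ) :
    (-1 : R) ^ n.choose 2 = if n % 4 = 0 ∨ n % 4 = 1 then 1 else -1 := by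
  induction n with
  | zero => simp
  | succ n ih =>
    rw [Nat.choose_succ_succ' n 1, Nat.choose_one_right, pow_add, ih]
    rcases Nat.even_or_odd n with hn | hn
    · rw [hn.neg_one_pow, one_mul]
      rw [Nat.even_iff] at hn
      exact if_congr (by omega) rfl rfl
    · rw [hn.neg_one_pow, neg_one_mul, apply_ite Neg.neg, neg_neg, ← ite_not]
      rw [Nat.odd_iff] at hn
      exact if_congr (by omega) rfl rfl

theorem eraseIdx_ofFn {α : Type*} {m : ℕ} (f : Fin (m + 1) → α) (s : Fin (m + 1)) :
    (List.ofFn f).eraseIdx s = List.ofFn (s.removeNth f) := by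
  refine List.ext_getElem (by simp [List.length_eraseIdx]; omega) fun k _ _ => ?_
  simp only [List.getElem_eraseIdx, List.getElem_ofFn, Fin.removeNth, Fin.succAbove, Fin.lt_def,
    Fin.val_castSucc]
  split_ifs <;> rfl

theorem sum_removeNth {M : Type*} [AddCommGroup M] {m : ℕ} (f : Fin (m + 1) → M)
    (s : Fin (m + 1)) : ∑ j, s.removeNth f j = ∑ j, f j - f s := by
  rw [Fin.sum_univ_succAbove f s, add_sub_cancel_left]
  rfl

theorem sum_mul_det_submatrix_succAbove {R : Type*} [CommRing R] {m : ℕ}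
    (A : Matrix (Fin (m + 1)) (Fin (m + 1)) R) (r k : Fin (m + 1)) :
    ∑ s : Fin (m + 1), (-1) ^ (s : ℕ) * (A r s * (A.submatrix k.succAbove s.succAbove).det) =
      if r = k then (-1) ^ (k : ℕ) * A.det else 0 := by
  have hadj : ∑ s, A r s * A.adjugate s k = if r = k then A.det else 0 := by
    rw [← Matrix.mul_apply, Matrix.mul_adjugate, Matrix.smul_apply, Matrix.one_apply, smul_eq_mul,
      mul_boole]
  rw [← mul_ite_zero, ← hadj, Finset.mul_sum]
  refine Finset.sum_congr rfl fun s _ => ?_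
  have hsign : ((-1 : R) ^ (k : ℕ)) * (-1) ^ (k : ℕ) = 1 := by rw [← mul_pow]; simp
  rw [Matrix.adjugate_fin_succ_eq_det_submatrix, pow_add]
  linear_combination (-(-1) ^ (s : ℕ) * A r s * (A.submatrix k.succAbove s.succAbove).det) * hsign

section ZpowMatrix

variable {K : Type*} [Field K] (q : K)

/-- The Laurent–Vandermonde matrix with rows `(q^{2 i_j})^{r - p}`, `0 ≤ r < n`, whose determinant
gives the structure constants when `p = ⌊(n-1)/2⌋`. The offset `p` is kept free, since the
Laplace expansion relates determinants of different sizes with equal offset. -/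
def zpowMatrix (p : ℤ) {n : ℕ} (i : Fin n → ℤ) : Matrix (Fin n) (Fin n) K :=
  Matrix.of fun r j => q ^ (2 * ((r : ℤ) - p) * i j)

theorem submatrix_zpowMatrix (p : ℤ) {m : ℕ} (i : Fin (m + 1) → ℤ) (s : Fin (m + 1)) :
    (zpowMatrix q p i).submatrix (Fin.last m).succAbove s.succAbove =
      zpowMatrix q p (s.removeNth i) := by
  ext r j
  simp [zpowMatrix, Fin.removeNth]

theorem sum_zpow_mul_det_zpowMatrix_removeNth (p : ℤ) {m : ℕ} (i : Fin (m + 1) → ℤ) :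
    ∑ s : Fin (m + 1), (-1) ^ (s : ℕ) *
        (q ^ (2 * ((m : ℤ) - p) * i s) * (zpowMatrix q p (s.removeNth i)).det) =
      (-1) ^ m * (zpowMatrix q p i).det := by
  have h := sum_mul_det_submatrix_succAbove (zpowMatrix q p i) (Fin.last m) (Fin.last m)
  rw [if_pos rfl] at h
  simpa only [submatrix_zpowMatrix] using! h

theorem sum_zpow_mul_det_zpowMatrix_removeNth_eq_zero (p : ℤ) {m r : ℕ} (hr : r < m)
    (i : Fin (m + 1) → ℤ) :
    ∑ s : Fin (m + 1), (-1) ^ (s : ℕ) *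
      (q ^ (2 * ((r : ℤ) - p) * i s) * (zpowMatrix q p (s.removeNth i)).det) = 0 := by
  have hlast : Fin.castSucc ⟨r, hr⟩ ≠ Fin.last m := (Fin.castSucc_lt_last _).ne
  have h := sum_mul_det_submatrix_succAbove (zpowMatrix q p i) (Fin.castSucc ⟨r, hr⟩) (Fin.last m)
  rw [if_neg hlast] at h
  simpa only [submatrix_zpowMatrix] using! h

variable {q}

theorem det_zpowMatrix_sub (hq : q ≠ 0) (p t : ℤ) {n : ℕ} (i : Fin n → ℤ) :
    (zpowMatrix q (p - t) i).det = q ^ (2 * t * ∑ j, i j) * (zpowMatrix q p i).det := by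
  rw [Finset.mul_sum, zpow_sum₀ hq, ← Matrix.det_mul_row]
  congr 1
  ext r j
  simp only [zpowMatrix, Matrix.of_apply]
  rw [← zpow_add₀ hq]
  ring_nf

end ZpowMatrix

/-- The diagonal operator `K = q^{2N}`, that is `K e_k = q^{2k} e_k`, which measures how far a
product `L_i L_j` is from a multiple of `L_{i+j}`. -/
noncomputable def qPowTwoN (q : ℂ) : Module.End ℂ (ℤ →₀ ℂ) :=
  Finsupp.lsum ℂ fun k : ℤ => q ^ (2 * k) • Finsupp.lsingle k

theorem qPowTwoN_single (q : ℂ) (k : ℤ) (c : ℂ) :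
    qPowTwoN q (Finsupp.single k c) = Finsupp.single k (q ^ (2 * k) * c) := by
  simp [qPowTwoN]

theorem Lop_single (q : ℂ) (m k : ℤ) (c : ℂ) :
    Lop q m (Finsupp.single k c) = Finsupp.single (k + m) (-(qnum q k) * q ^ (k + m) * c) := by
  simp [Lop]

section Bracket

variable {q : ℂ}

theorem qnum_mul_zpow (hq : q ≠ 0) (x : ℤ) :
    qnum q x * q ^ x = (q - q⁻¹)⁻¹ * (q ^ (2 * x) - 1) := by
  have hx : q ^ x ≠ 0 := zpow_ne_zero _ hq
  rw [qnum, two_mul, zpow_add₀ hq, zpow_neg, div_mul_eq_mul_div, sub_mul, inv_mul_cancel₀ hx,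
    div_eq_inv_mul]

theorem Lop_mul_Lop (hq : q ≠ 0) (i j : ℤ) :
    Lop q i * Lop q j =
      (q - q⁻¹)⁻¹ • Lop q (i + j) +
        (-(q - q⁻¹)⁻¹ * q ^ (2 * j)) • (Lop q (i + j) * qPowTwoN q) := by
  refine Finsupp.lhom_ext fun k c => ?_
  simp only [Module.End.mul_apply, LinearMap.add_apply, LinearMap.smul_apply, Lop_single,
    qPowTwoN_single, Finsupp.smul_single, smul_eq_mul, ← Finsupp.single_add]
  rw [show k + j + i = k + (i + j) by ring]
  congr 1
  have hzpow : q ^ (2 * (k + j)) = q ^ (2 * j) * q ^ (2 * k) := by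
    rw [← zpow_add₀ hq]; ring_nf
  linear_combination (qnum q k * q ^ (k + (i + j)) * c) *
    ((qnum_mul_zpow hq (k + j)).trans (by rw [hzpow]))

theorem sum_smul_Lop_mul_Lop (hq : q ≠ 0) (p : ℤ) {m : ℕ} (hm : m ≠ 0) (i : Fin (m + 1) → ℤ) :
    ∑ s : Fin (m + 1), ((-1) ^ (s : ℕ) *
        (q ^ (2 * ((m : ℤ) - p) * i s) * (zpowMatrix q p (s.removeNth i)).det)) •
        (Lop q (i s) * Lop q (∑ j, i j - i s)) =
      ((q - q⁻¹)⁻¹ * ((-1) ^ m * (zpowMatrix q p i).det)) • Lop q (∑ j, i j) := by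
  set S := ∑ j, i j
  set D : Fin (m + 1) → ℂ := fun s => (zpowMatrix q p (s.removeNth i)).det
  have hlower (s : Fin (m + 1)) : q ^ (2 * ((m : ℤ) - p) * i s) * q ^ (2 * (S - i s)) =
      q ^ (2 * S) * q ^ (2 * (((m - 1 : ℕ) : ℤ) - p) * i s) := by
    rw [← zpow_add₀ hq, ← zpow_add₀ hq, Nat.cast_pred (Nat.pos_of_ne_zero hm)]
    ring_nf
  have hterm (s : Fin (m + 1)) :
      ((-1) ^ (s : ℕ) * (q ^ (2 * ((m : ℤ) - p) * i s) * D s)) •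
          (Lop q (i s) * Lop q (S - i s)) =
        ((q - q⁻¹)⁻¹ * ((-1) ^ (s : ℕ) * (q ^ (2 * ((m : ℤ) - p) * i s) * D s))) • Lop q S +
        (-(q - q⁻¹)⁻¹ * q ^ (2 * S) * ((-1) ^ (s : ℕ) *
          (q ^ (2 * (((m - 1 : ℕ) : ℤ) - p) * i s) * D s))) • (Lop q S * qPowTwoN q) := by
    rw [Lop_mul_Lop hq, add_sub_cancel, smul_add, smul_smul, smul_smul]
    congr 2
    · ring
    · linear_combination (-(q - q⁻¹)⁻¹ * (-1) ^ (s : ℕ) * D s) * hlower s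
  simp only [hterm, Finset.sum_add_distrib, ← Finset.sum_smul, ← Finset.mul_sum, D]
  rw [sum_zpow_mul_det_zpowMatrix_removeNth,
    sum_zpow_mul_det_zpowMatrix_removeNth_eq_zero q p (Nat.sub_one_lt hm), mul_zero, zero_smul,
    add_zero]

theorem fVW_eq_det_zpowMatrix (q : ℂ) (n : ℕ) (i : Fin n → ℤ) :
    fVW q n i = (-1) ^ n.choose 2 * (q - q⁻¹) ^ (1 - (n : ℤ)) *
      (zpowMatrix q ((n - 1) / 2 : ℕ) i).det := by
  rw [neg_one_pow_choose_two]
  rfl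

theorem sum_fVW_smul_Lop_mul_Lop (hq : q ≠ 0) (hq2 : q ^ 2 ≠ 1) {m : ℕ} (hm : m ≠ 0)
    (i : Fin (m + 1) → ℤ) :
    ∑ s : Fin (m + 1), ((-1) ^ (s : ℕ) * (q ^ (2 * ((m : ℤ) - ((m - 1) / 2 : ℕ)) * i s) *
        fVW q m (s.removeNth i))) • (Lop q (i s) * Lop q (∑ j, i j - i s)) =
      (q ^ (2 * (((m / 2 : ℕ) : ℤ) - ((m - 1) / 2 : ℕ)) * ∑ j, i j) * fVW q (m + 1) i) •
        Lop q (∑ j, i j) := by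
  set p : ℤ := (((m - 1) / 2 : ℕ) : ℤ)
  set p' : ℤ := ((m / 2 : ℕ) : ℤ)
  have hshift : (zpowMatrix q p i).det =
      q ^ (2 * (p' - p) * ∑ j, i j) * (zpowMatrix q p' i).det := by
    rw [← det_zpowMatrix_sub hq, sub_sub_cancel]
  have hpow : (q - q⁻¹) ^ (1 - ((m + 1 : ℕ) : ℤ)) =
      (q - q⁻¹) ^ (1 - (m : ℤ)) * (q - q⁻¹)⁻¹ := by
    rw [← zpow_sub_one₀ (sub_inv_ne_zero_of_sq_ne_one hq hq2)]
    push_cast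
    ring_nf
  calc
    _ = ((-1) ^ m.choose 2 * (q - q⁻¹) ^ (1 - (m : ℤ))) •
        ∑ s : Fin (m + 1), ((-1) ^ (s : ℕ) *
          (q ^ (2 * ((m : ℤ) - p) * i s) * (zpowMatrix q p (s.removeNth i)).det)) •
          (Lop q (i s) * Lop q (∑ j, i j - i s)) := by
      rw [Finset.smul_sum]
      refine Finset.sum_congr rfl fun s _ => ?_
      rw [fVW_eq_det_zpowMatrix, smul_smul]
      congr 1
      ring
    _ = _ := by
      rw [sum_smul_Lop_mul_Lop hq p hm, smul_smul, fVW_eq_det_zpowMatrix, Nat.add_sub_cancel,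
        Nat.choose_succ_succ' m 1, Nat.choose_one_right, pow_add, hpow, hshift]
      congr 1
      ring

/-- The exponent `e_n` in `⟦L_{i₁},…,L_{i_n}⟧ = q^{e_n S} f_n(i₁,…,i_n) L_S`, `n ≥ 2`, where
`S = i₁ + ⋯ + i_n`. Only the `2`-bracket deviates from the structure constants, and this
is what makes `(x₃, y₃)` exceptional. -/
def bracketTwist (n : ℕ) : ℤ := if n = 2 then -1 else 0

theorem qxm_sub_qym_sub_bracketTwist {m : ℕ} (hm : 2 ≤ m) :
    qxm (m + 1) - qym (m + 1) - bracketTwist m = 2 * ((m : ℤ) - ((m - 1) / 2 : ℕ)) := by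
  unfold qxm qym bracketTwist
  split_ifs <;> omega

theorem qym_add_bracketTwist {m : ℕ} (hm : 2 ≤ m) :
    qym (m + 1) + bracketTwist m = 2 * ((((m - 1) / 2 : ℕ) : ℤ) - (m / 2 : ℕ)) := by
  unfold qym bracketTwist
  split_ifs <;> omega

theorem qnbr_ofFn_succ (q : ℂ) {m : ℕ} (hm : 2 ≤ m) (i : Fin (m + 1) → ℤ) :
    qnbr q (List.ofFn i) = ∑ s : Fin (m + 1), ((-1) ^ (s : ℕ) *
        q ^ (qxm (m + 1) * i s + qym (m + 1) * (∑ j, i j - i s))) •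
        (Lop q (i s) * qnbr q (List.ofFn (s.removeNth i))) := by
  have hrec (l : List ℤ) (hl : l.length = m + 1) : qnbrAux q (m + 1) l =
      ∑ s ∈ Finset.range l.length, ((-1 : ℂ) ^ s *
        q ^ (qxm l.length * l.getD s 0 + qym l.length * (l.sum - l.getD s 0))) •
        (Lop q (l.getD s 0) * qnbrAux q m (l.eraseIdx s)) := by
    match l with
    | [] | [_] | [_, _] => simp at hl <;> omega
    | _ :: _ :: _ :: _ => rw [qnbrAux] <;> simp
  simp only [qnbr, List.length_ofFn]
  rw [hrec _ List.length_ofFn, List.length_ofFn, Finset.sum_range]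
  refine Finset.sum_congr rfl fun s _ => ?_
  have hget : (List.ofFn i).getD s 0 = i s := by
    rw [List.getD_eq_getElem _ _ (by simpa using s.is_le), List.getElem_ofFn]
  rw [hget, eraseIdx_ofFn, List.sum_ofFn]

theorem qnbr_ofFn_two (hq : q ≠ 0) (hq2 : q ^ 2 ≠ 1) (i : Fin 2 → ℤ) :
    qnbr q (List.ofFn i) = (q ^ (-∑ j, i j) * fVW q 2 i) • Lop q (∑ j, i j) := by
  have hone (s : Fin 2) : fVW q 1 (s.removeNth i) = 1 := by simp [fVW]
  have hsum : q ^ (2 * i 0) • (Lop q (i 0) * Lop q (i 1)) +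
      (-q ^ (2 * i 1)) • (Lop q (i 1) * Lop q (i 0)) = fVW q 2 i • Lop q (∑ j, i j) := by
    simpa [hone, Fin.sum_univ_two] using
      sum_fVW_smul_Lop_mul_Lop hq hq2 one_ne_zero i
  have hofFn : List.ofFn i = [i 0, i 1] := by simp [List.ofFn_succ]
  have hexp (a b : ℤ) : q ^ (a - b) = q ^ (-(a + b)) * q ^ (2 * a) := by
    rw [← zpow_add₀ hq]
    ring_nf
  rw [mul_smul, ← hsum, Fin.sum_univ_two, hofFn]
  simp only [qnbr, List.length_cons, List.length_nil, qnbrAux]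
  rw [hexp (i 0), hexp (i 1), add_comm (i 1)]
  module

theorem qnbr_ofFn (hq : q ≠ 0) (hq2 : q ^ 2 ≠ 1) {n : ℕ} (hn : 2 ≤ n) (i : Fin n → ℤ) :
    qnbr q (List.ofFn i) =
      (q ^ (bracketTwist n * ∑ j, i j) * fVW q n i) • Lop q (∑ j, i j) := by
  induction n, hn using Nat.le_induction with
  | base => simpa [bracketTwist] using qnbr_ofFn_two hq hq2 i
  | succ m hm ih =>
    set S := ∑ j, i j
    have hexp (s : Fin (m + 1)) : q ^ (qxm (m + 1) * i s + qym (m + 1) * (S - i s)) *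
        q ^ (bracketTwist m * (S - i s)) =
        q ^ ((qym (m + 1) + bracketTwist m) * S) *
          q ^ (2 * ((m : ℤ) - ((m - 1) / 2 : ℕ)) * i s) := by
      rw [← qxm_sub_qym_sub_bracketTwist hm, ← zpow_add₀ hq, ← zpow_add₀ hq]
      ring_nf
    have htwist : bracketTwist (m + 1) = 0 := if_neg (by omega)
    calc
      _ = q ^ ((qym (m + 1) + bracketTwist m) * S) • ∑ s : Fin (m + 1), ((-1) ^ (s : ℕ) *
          (q ^ (2 * ((m : ℤ) - ((m - 1) / 2 : ℕ)) * i s) * fVW q m (s.removeNth i))) •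
          (Lop q (i s) * Lop q (S - i s)) := by
        rw [qnbr_ofFn_succ q hm, Finset.smul_sum]
        refine Finset.sum_congr rfl fun s _ => ?_
        rw [ih, sum_removeNth, mul_smul_comm, smul_smul, smul_smul]
        congr 1
        linear_combination ((-1) ^ (s : ℕ) * fVW q m (s.removeNth i)) * hexp s
      _ = _ := by
        rw [sum_fVW_smul_Lop_mul_Lop hq hq2 (by omega), qym_add_bracketTwist hm, smul_smul,
          ← mul_assoc, ← zpow_add₀ hq, ← add_mul, ← mul_add, sub_add_sub_cancel, sub_self,
          mul_zero, htwist]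

end Bracket

/-- the q-n-bracket of the operators `L` closes with structure
constants `f_n`: `⟦L_{i₁},…,L_{i_n}⟧ = f_n(i₁,…,i_n) • L_{i₁+⋯+i_n}`. -/
theorem stmt6 (q : ℂ) (hq : q ≠ 0) (hq2 : q ^ 2 ≠ 1) (n : ℕ) (hn : 3 ≤ n)
    (i : Fin n → ℤ) :
    qnbr q (List.ofFn i) = fVW q n i • Lop q (∑ j, i j) := by
  have htwist : bracketTwist n = 0 := if_neg (by omega)
  rw [qnbr_ofFn hq hq2 (by omega), htwist, zero_mul, zpow_zero, one_mul]
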